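/- Let K be a field, n ≥ 1, and let F, G, F', G' be n×n matrices over K. Define the 4n×3n block matrix Φ(F,G) with n×n blocks, whose four block rows are [I, 0, 0], [0, I, 0], [F, I, 0], [G, 0, I] (I the n×n identity). Then the following are equivalent: (1) there exist an invertible 2n×2n matrix T₀ and an invertible 3n×3n matrix Q whose lower-left n×2n block (rows 2n+1,…,3n, columns 1,…,2n) is zero, such that diag(T₀, T₀) · Φ(F,G) · Q = Φ(F',G') (here diag(T₀,T₀) is the 4n×4n block-diagonal matrix with T₀ acting on the first 2n rows and the same T₀ on the last 2n rows); (2) there exists an invertible n×n matrix T over K with F' = T F T⁻¹ and G' = T G T⁻¹. -/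

import Mathlib

/-- The `4n × 3n` block matrix `Φ(F,G)` with block rows
`[I,0,0], [0,I,0], [F,I,0], [G,0,I]`.  Rows are indexed by
`(Fin n ⊕ Fin n) ⊕ (Fin n ⊕ Fin n)` (first `2n` rows, last `2n` rows) and columns
by `(Fin n ⊕ Fin n) ⊕ Fin n` (first `2n` columns, last `n` columns). -/
def PhiBlock {K : Type} [Field K] {n : ℕ} (F G : Matrix (Fin n) (Fin n) K) :
    Matrix ((Fin n ⊕ Fin n) ⊕ (Fin n ⊕ Fin n)) ((Fin n ⊕ Fin n) ⊕ Fin n) K :=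
  Matrix.fromBlocks 1 0 (Matrix.fromBlocks F 1 G 0) (Matrix.fromRows 0 1)

/-!
The upper stripe of both matrices is `[I, 0]`, which forces the column transformation to be
`diag(T₀⁻¹, D)`; the lower stripe `[X, Y]` then goes to `[T₀ X T₀⁻¹, T₀ Y D]`. Stability of
`Y = [0; I]` makes `T₀` block lower triangular with lower-right block `D⁻¹`, and the constant blocks
`I`, `0` in the second block column of `X = [F, I; G, 0]` then force `T₀ = diag(D⁻¹, D⁻¹)`. Hence
`D⁻¹` conjugates `(F, G)` to `(F', G')`.
-/

open Matrix

section Units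

variable {R m l : Type*} [Semiring R] [Fintype m] [DecidableEq m]

theorem units_val_mul_eq_zero_iff (U : (Matrix m m R)ˣ) {B : Matrix m l R} :
    U.val * B = 0 ↔ B = 0 := by
  refine ⟨fun h => ?_, fun h => by rw [h, Matrix.mul_zero]⟩
  rw [← Matrix.one_mul B, ← U.inv_mul, Matrix.mul_assoc, h, Matrix.mul_zero]

theorem mul_units_val_eq_zero_iff (U : (Matrix m m R)ˣ) {B : Matrix l m R} :
    B * U.val = 0 ↔ B = 0 := by
  refine ⟨fun h => ?_, fun h => by rw [h, Matrix.zero_mul]⟩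
  rw [← Matrix.mul_one B, ← U.mul_inv, ← Matrix.mul_assoc, h, Matrix.zero_mul]

theorem isUnit_fromBlocks_diagonal_iff [Fintype l] [DecidableEq l] {A : Matrix m m R}
    {D : Matrix l l R} : IsUnit (fromBlocks A 0 0 D) ↔ IsUnit A ∧ IsUnit D := by
  constructor
  · rintro ⟨⟨_, B, hAB, hBA⟩, rfl⟩
    rw [← fromBlocks_toBlocks B, fromBlocks_multiply, ← fromBlocks_one, fromBlocks_inj] at hAB hBA
    simp only [Matrix.zero_mul, Matrix.mul_zero, add_zero, zero_add] at hAB hBA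
    exact ⟨⟨⟨A, B.toBlocks₁₁, hAB.1, hBA.1⟩, rfl⟩,
      ⟨⟨D, B.toBlocks₂₂, hAB.2.2.2, hBA.2.2.2⟩, rfl⟩⟩
  · rintro ⟨⟨A, rfl⟩, ⟨D, rfl⟩⟩
    exact ⟨⟨fromBlocks A 0 0 D, fromBlocks A⁻¹.val 0 0 D⁻¹.val,
      by simp [fromBlocks_multiply], by simp [fromBlocks_multiply]⟩, rfl⟩

end Units

/-- Isomorphism of objects of the bimodule category: the two horizontal stripes, both indexed by
`m`, are multiplied by the same invertible `T₀`; columns are transformed invertibly within the two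
vertical stripes, indexed by `k` and `l`, and columns of the first may be added to the second. -/
def StripeEquivalent {R m k l : Type*} [Semiring R] [Fintype m] [Fintype k] [Fintype l]
    [DecidableEq m] [DecidableEq k] [DecidableEq l] (M M' : Matrix (m ⊕ m) (k ⊕ l) R) : Prop :=
  ∃ (T₀ : Matrix m m R) (Q : Matrix (k ⊕ l) (k ⊕ l) R),
    IsUnit T₀ ∧ IsUnit Q ∧ (∀ i j, Q (Sum.inr i) (Sum.inl j) = 0) ∧
      fromBlocks T₀ 0 0 T₀ * M * Q = M'

section NormalizedUpperStripe

variable {R m l : Type*} [Semiring R] [Fintype m] [Fintype l] [DecidableEq m]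
  {X X' : Matrix m m R} {Y Y' : Matrix m l R}

theorem fromBlocks_diagonal_mul_fromBlocks_one_zero_mul_eq_iff (T₀ : (Matrix m m R)ˣ)
    {A : Matrix m m R} {B : Matrix m l R} {D : Matrix l l R} :
    fromBlocks T₀.val 0 0 T₀.val * fromBlocks (1 : Matrix m m R) 0 X Y * fromBlocks A B 0 D =
        fromBlocks 1 0 X' Y' ↔
      A = T₀⁻¹.val ∧ B = 0 ∧ T₀.val * X = X' * T₀.val ∧ T₀.val * Y * D = Y' := by
  simp only [fromBlocks_multiply, fromBlocks_inj, Matrix.mul_one, Matrix.mul_zero, Matrix.zero_mul,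
    add_zero, zero_add, units_val_mul_eq_zero_iff, T₀.mul_eq_one_iff_inv_eq]
  rw [eq_comm (a := A)]
  refine and_congr_right fun hA => and_congr_right fun hB => ?_
  rw [← hA, hB, Matrix.mul_zero, zero_add, Units.mul_inv_eq_iff_eq_mul]

theorem stripeEquivalent_fromBlocks_one_zero_iff [DecidableEq l] :
    StripeEquivalent (fromBlocks 1 0 X Y) (fromBlocks 1 0 X' Y') ↔
      ∃ (T₀ : (Matrix m m R)ˣ) (D : (Matrix l l R)ˣ),
        T₀.val * X = X' * T₀.val ∧ T₀.val * Y * D.val = Y' := by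
  constructor
  · rintro ⟨_, Q, ⟨T₀, rfl⟩, hQ, hQ₂₁, h⟩
    have hQ_blocks : Q = fromBlocks Q.toBlocks₁₁ Q.toBlocks₁₂ 0 Q.toBlocks₂₂ := by
      rw [← show Q.toBlocks₂₁ = 0 from Matrix.ext hQ₂₁, fromBlocks_toBlocks]
    rw [hQ_blocks, fromBlocks_diagonal_mul_fromBlocks_one_zero_mul_eq_iff] at h
    obtain ⟨-, hQ₁₂, hX, hY⟩ := h
    rw [hQ_blocks, hQ₁₂, isUnit_fromBlocks_diagonal_iff] at hQ
    obtain ⟨D, hD⟩ := hQ.2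
    exact ⟨T₀, D, hX, hD ▸ hY⟩
  · rintro ⟨T₀, D, hX, hY⟩
    exact ⟨T₀, fromBlocks T₀⁻¹.val 0 0 D, T₀.isUnit,
      isUnit_fromBlocks_diagonal_iff.mpr ⟨T₀⁻¹.isUnit, D.isUnit⟩, fun _ _ => rfl,
      (fromBlocks_diagonal_mul_fromBlocks_one_zero_mul_eq_iff T₀).mpr ⟨rfl, rfl, hX, hY⟩⟩

end NormalizedUpperStripe

section LowerStripe

variable {R m k : Type*} [Semiring R] [Fintype m] [DecidableEq m]

theorem fromBlocks_mul_fromRows_zero_one_mul_eq_iff [Fintype k] {a : Matrix k k R}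
    {b : Matrix k m R} {c : Matrix m k R} {d : Matrix m m R} (D : (Matrix m m R)ˣ) :
    fromBlocks a b c d * fromRows (0 : Matrix k m R) (1 : Matrix m m R) * D.val = fromRows 0 1 ↔
      b = 0 ∧ d = D⁻¹.val := by
  simp only [fromBlocks_mul_fromRows, fromRows_mul, fromRows_ext_iff, Matrix.mul_zero,
    Matrix.mul_one, zero_add, mul_units_val_eq_zero_iff, D.mul_eq_one_iff_eq_inv]

theorem fromBlocks_lower_mul_eq_mul_fromBlocks_lower_iff {a c d F G F' G' : Matrix m m R} :
    fromBlocks a 0 c d * fromBlocks F 1 G 0 = fromBlocks F' 1 G' 0 * fromBlocks a 0 c d ↔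
      a = d ∧ c = 0 ∧ d * F = F' * d ∧ d * G = G' * d := by
  simp only [fromBlocks_multiply, fromBlocks_inj, Matrix.mul_one, Matrix.one_mul, Matrix.mul_zero,
    Matrix.zero_mul, add_zero, zero_add]
  constructor
  · rintro ⟨hF, rfl, hG, rfl⟩
    exact ⟨rfl, rfl, by simpa using hF, by simpa using hG⟩
  · rintro ⟨rfl, rfl, hF, hG⟩
    exact ⟨by simpa using hF, rfl, by simpa using hG, rfl⟩

end LowerStripe

/-- The matrix `Φ(F, G)` of `PhiBlock`, with blocks indexed by an arbitrary type and entries in any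
type with `0` and `1`. -/
def phiMatrix {R m : Type*} [Zero R] [One R] [DecidableEq m] (F G : Matrix m m R) :
    Matrix ((m ⊕ m) ⊕ (m ⊕ m)) ((m ⊕ m) ⊕ m) R :=
  fromBlocks 1 0 (fromBlocks F 1 G 0) (fromRows 0 1)

theorem stmt_8_general {R m : Type*} [Semiring R] [Fintype m] [DecidableEq m]
    (F G F' G' : Matrix m m R) :
    StripeEquivalent (phiMatrix F G) (phiMatrix F' G') ↔
      ∃ T : (Matrix m m R)ˣ, F' = T.val * F * T⁻¹.val ∧ G' = T.val * G * T⁻¹.val := by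
  simp only [phiMatrix, stripeEquivalent_fromBlocks_one_zero_iff, Units.eq_mul_inv_iff_mul_eq]
  constructor
  · rintro ⟨T₀, D, hX, hY⟩
    rw [← fromBlocks_toBlocks T₀.val] at hX hY
    obtain ⟨hT₁₂, hT₂₂⟩ := (fromBlocks_mul_fromRows_zero_one_mul_eq_iff D).mp hY
    rw [hT₁₂, hT₂₂, fromBlocks_lower_mul_eq_mul_fromBlocks_lower_iff] at hX
    obtain ⟨-, -, hF, hG⟩ := hX
    exact ⟨D⁻¹, hF.symm, hG.symm⟩
  · rintro ⟨T, hF, hG⟩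
    obtain ⟨T₀, hT₀⟩ := isUnit_fromBlocks_diagonal_iff.mpr ⟨T.isUnit, T.isUnit⟩
    refine ⟨T₀, T⁻¹, ?_, ?_⟩ <;> rw [hT₀]
    · exact fromBlocks_lower_mul_eq_mul_fromBlocks_lower_iff.mpr ⟨rfl, rfl, hF.symm, hG.symm⟩
    · exact (fromBlocks_mul_fromRows_zero_one_mul_eq_iff T⁻¹).mpr ⟨rfl, by rw [inv_inv]⟩

/-- `Φ(F,G)` can be transformed into `Φ(F',G')` by multiplying both `2n`-row
horizontal stripes on the left by the same invertible matrix `T₀` and on the right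
by an invertible `3n × 3n` matrix `Q` whose lower-left `n × 2n` block is zero, if
and only if the pairs `(F,G)` and `(F',G')` are simultaneously conjugate. -/
theorem stmt_8 (K : Type) [Field K] (n : ℕ) (hn : 1 ≤ n)
    (F G F' G' : Matrix (Fin n) (Fin n) K) :
    (∃ (T₀ : Matrix (Fin n ⊕ Fin n) (Fin n ⊕ Fin n) K)
       (Q : Matrix ((Fin n ⊕ Fin n) ⊕ Fin n) ((Fin n ⊕ Fin n) ⊕ Fin n) K),
         IsUnit T₀ ∧ IsUnit Q ∧
         (∀ (i : Fin n) (j : Fin n ⊕ Fin n), Q (Sum.inr i) (Sum.inl j) = 0) ∧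
         Matrix.fromBlocks T₀ 0 0 T₀ * PhiBlock F G * Q = PhiBlock F' G') ↔
    (∃ T : Matrix (Fin n) (Fin n) K,
       IsUnit T ∧ F' = T * F * T⁻¹ ∧ G' = T * G * T⁻¹) := by
  refine (stmt_8_general F G F' G').trans ?_
  simp only [IsUnit, exists_exists_eq_and, coe_units_inv]
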